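/- Let A be a commutative noetherian local ring, let x, y ∈ A be an exact pair of zero divisors, and let a, b ∈ A. Then for every integer i there are isomorphisms of A-modules: (a) Ext_A^i(H_b, G_a) ≅ Ext_A^i(H_a, G_b); (b) Ext_A^i(G_a, H_b) ≅ Ext_A^i(G_b, H_a); (c) Ext_A^i(G_a, G_b) ≅ Ext_A^i(H_b, H_a). -/

import Mathlib

/-!
Formalization of results from "Construction of totally reflexive modules
from an exact pair of zero divisors" by Henrik Holm.
-/

noncomputable section

/-- Non-units `x, y` in `A` form an *exact pair of zero divisors* if
`Ann_A(x) = (y)` and `Ann_A(y) = (x)`. -/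
def IsExactZeroDivisorPair {A : Type*} [CommRing A] (x y : A) : Prop :=
  ¬ IsUnit x ∧ ¬ IsUnit y ∧
    (∀ a : A, a * x = 0 ↔ a ∈ Ideal.span {y}) ∧
    (∀ a : A, a * y = 0 ↔ a ∈ Ideal.span {x})

open Matrix in
/-- The matrix `γ_a = [[x, a], [0, y]]`. -/
def gammaMat {A : Type*} [CommRing A] (x y a : A) : Matrix (Fin 2) (Fin 2) A :=
  !![x, a; 0, y]

open Matrix in
/-- The matrix `η_a = [[y, -a], [0, x]]`. -/
def etaMat {A : Type*} [CommRing A] (x y a : A) : Matrix (Fin 2) (Fin 2) A :=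
  !![y, -a; 0, x]

/-- `G_a`, the cokernel of `γ_a : A² → A²`. -/
abbrev Gmod {A : Type*} [CommRing A] (x y a : A) : Type _ :=
  (Fin 2 → A) ⧸ LinearMap.range (Matrix.toLin' (gammaMat x y a))

/-- `H_a`, the cokernel of `η_a : A² → A²`. -/
abbrev Hmod {A : Type*} [CommRing A] (x y a : A) : Type _ :=
  (Fin 2 → A) ⧸ LinearMap.range (Matrix.toLin' (etaMat x y a))

universe u

/-!
The adjugate of `γ_a` is `η_a` and vice versa, so the duality underlying all three isomorphisms is
the linear anti-automorphism `p ↦ adj p` of the `2 × 2` matrices, and each of them reads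
`Ext^i(coker p, coker p') ≅ Ext^i(coker (adj p'), coker (adj p))`. Since `p` and `adj p` form an
exact pair, `coker p` has the `2`-periodic free resolution with differentials `p, adj p, p, …`, and
`Ext^i(coker p, coker p')` becomes a subquotient of the module of all matrices `w`:

* for odd `i`, the solutions of `adj p' * w * adj p = 0` modulo all `p' * v + v' * p`;
* for even `i > 0`, the solutions of `p' * w = 0 = w * p` modulo all `adj p' * v * adj p`
  (for `i = 0` nothing is divided out).

An anti-automorphism exchanges left and right multiplication and hence maps these subquotients to
those belonging to `adj p'` and `adj p`.
-/

open CategoryTheory LinearMap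

section Subquotient

variable {R M N : Type*} [Ring R] [AddCommGroup M] [Module R M] [AddCommGroup N] [Module R N]

/-- The isomorphism of subquotients `Z / B ≃ φ(Z) / φ(B)` induced by a linear map `φ` with
`ker φ ≤ B`. The images enter as `Z'` and `B'`, so that they can be given in any form. The
submodule `B` need not lie in `Z`; `Z / B` then stands for `Z / (B ∩ Z)`. -/
def subquotientEquivOfMap (φ : M →ₗ[R] N) {Z B : Submodule R M} {Z' B' : Submodule R N}
    (hZ : Z.map φ = Z') (hB : B.map φ = B') (hφ : ker φ ≤ B) :
    (Z ⧸ B.submoduleOf Z) ≃ₗ[R] Z' ⧸ B'.submoduleOf Z' :=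
  let φZ : Z →ₗ[R] Z' := φ.restrict fun _ hz ↦ hZ ▸ Submodule.mem_map_of_mem hz
  have ker_eq : B.submoduleOf Z = ker ((B'.submoduleOf Z').mkQ ∘ₗ φZ) := by
    rw [ker_comp, Submodule.ker_mkQ]
    ext ⟨z, hz⟩
    suffices z ∈ B ↔ ∃ b ∈ B, φ b = φ z by simpa [φZ, Submodule.submoduleOf, ← hB] using this
    refine ⟨fun h ↦ ⟨z, h, rfl⟩, fun ⟨b, hb, hbz⟩ ↦ ?_⟩
    have hzb : z - b ∈ B := hφ (by simp [hbz])
    simpa using add_mem hzb hb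
  have φZ_surjective : Function.Surjective φZ := by
    rintro ⟨w, hw⟩
    obtain ⟨z, hz, rfl⟩ := hZ.symm ▸ hw
    exact ⟨⟨z, hz⟩, rfl⟩
  Submodule.quotEquivOfEq _ _ ker_eq ≪≫ₗ
    quotKerEquivOfSurjective _ ((Submodule.mkQ_surjective _).comp φZ_surjective)

/-- The homology of a short complex of modules as the subquotient `ker b / range a` of its middle
term. -/
def homologyIsoSubquotient {A L M N : Type u} [CommRing A] [AddCommGroup L] [Module A L]
    [AddCommGroup M] [Module A M] [AddCommGroup N] [Module A N] (a : L →ₗ[A] M) (b : M →ₗ[A] N)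
    (hab : ModuleCat.ofHom a ≫ ModuleCat.ofHom b = 0) :
    (ShortComplex.mk _ _ hab).homology ≅
      ModuleCat.of A (ker b ⧸ (range a).submoduleOf (ker b)) :=
  ShortComplex.moduleCatHomologyIso _ ≪≫ (Submodule.quotEquivOfEq _ _ (by
    ext z
    simp [Submodule.submoduleOf, ShortComplex.moduleCatToCycles, Subtype.ext_iff])).toModuleIso

end Subquotient

section Conj

variable {A V W : Type*} [CommRing A] [AddCommGroup V] [Module A V] [AddCommGroup W] [Module A W]

lemma map_ker_conj (e : V ≃ₗ[A] W) (a : Module.End A V) :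
    (ker a).map e.toLinearMap = ker (e.conj a) := by
  ext w
  simp [Submodule.mem_map_equiv, LinearEquiv.conj_apply]

lemma map_range_conj (e : V ≃ₗ[A] W) (a : Module.End A V) :
    (range a).map e.toLinearMap = range (e.conj a) := by
  rw [LinearEquiv.conj_apply, range_comp_of_range_eq_top _ e.symm.range, range_comp]

end Conj

section Projective

variable {A F G M N : Type*} [CommRing A] [AddCommGroup F] [Module A F] [AddCommGroup G]
  [Module A G] [AddCommGroup M] [Module A M] [AddCommGroup N] [Module A N] [Module.Projective A F]

lemma exact_compRight_of_projective {f : M →ₗ[A] G} {g : G →ₗ[A] N} (h : Function.Exact f g) :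
    Function.Exact (compRight A (M := F) f) (compRight A (M := F) g) := by
  refine exact_iff.2 (le_antisymm (fun w hw ↦ ?_) ?_)
  · have hw' : ∀ p, w p ∈ range f := fun p ↦ (h (w p)).1 (LinearMap.congr_fun hw p)
    obtain ⟨v, hv⟩ := Module.projective_lifting_property f.rangeRestrict (w.codRestrict _ hw')
      f.surjective_rangeRestrict
    exact ⟨v, LinearMap.ext fun p ↦ congrArg Subtype.val (LinearMap.congr_fun hv p)⟩
  · rintro _ ⟨v, rfl⟩
    exact LinearMap.ext fun p ↦ h.apply_apply_eq_zero (v p)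

lemma range_compRight_mkQ (S : Submodule A G) : range (compRight A (M := F) S.mkQ) = ⊤ :=
  range_eq_top.2 fun w ↦ Module.projective_lifting_property S.mkQ w S.mkQ_surjective

lemma ker_compRight_mkQ_range (f : M →ₗ[A] G) :
    ker (compRight A (M := F) (range f).mkQ) = range (compRight A f) :=
  (exact_compRight_of_projective (exact_map_mkQ_range f)).linearMap_ker_eq

lemma map_compRight_mkQ_range (f : F →ₗ[A] F) (f' : G →ₗ[A] G) :
    (range (compRight A f') ⊔ range (lcomp A G f)).map (compRight A (range f').mkQ) =
      range (lcomp A (G ⧸ range f') f) := by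
  have map_left : (range (compRight A (M := F) f')).map (compRight A (range f').mkQ) = ⊥ :=
    le_ker_iff_map.1 (ker_compRight_mkQ_range f').ge
  rw [Submodule.map_sup, map_left, bot_sup_eq, ← range_comp]
  exact range_comp_of_range_eq_top (lcomp A _ f) (range_compRight_mkQ (range f'))

end Projective

/-- Two endomorphisms of a module form an exact pair if the kernel of each is the image of the
other. This is the module version of an exact pair of zero divisors; its cokernels have
`2`-periodic resolutions. -/
structure IsExactPair {A F : Type*} [CommRing A] [AddCommGroup F] [Module A F]
    (f g : F →ₗ[A] F) : Prop where
  exact : Function.Exact f g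
  exact_symm : Function.Exact g f

/-- `Ext_A^i(M, N)`, for unbundled modules `M` and `N`. -/
abbrev extModule (A : Type u) [CommRing A] (i : ℕ) (M N : Type u) [AddCommGroup M] [Module A M]
    [AddCommGroup N] [Module A N] : ModuleCat.{u} A :=
  ((Ext A (ModuleCat A) i).obj (Opposite.op (ModuleCat.of A M))).obj (ModuleCat.of A N)

/-- The subquotient of `Hom(F, G)` that represents `Ext^i(coker f, coker f')` for odd `i`, where
`(f, g)` and `(f', g')` are exact pairs on `F` and `G`: the maps `w` with `g' w g = 0` modulo the
maps `f' v + v' f`. -/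
abbrev ExtOddModel {A F G : Type*} [CommRing A] [AddCommGroup F] [Module A F] [AddCommGroup G]
    [Module A G] (f g : F →ₗ[A] F) (f' g' : G →ₗ[A] G) : Type _ :=
  ker (compRight A g' ∘ₗ lcomp A G g) ⧸
    (range (compRight A f') ⊔ range (lcomp A G f)).submoduleOf (ker (compRight A g' ∘ₗ lcomp A G g))

/-- The subquotient of `Hom(F, G)` that represents `Ext^i(coker f, coker f')` for even `i`, where
`(f, g)` and `(f', g')` are exact pairs on `F` and `G`: the maps `w` with `f' w = 0 = w f` modulo
the maps `g' v g`. The scalar `0` or `1` suppresses the denominator for `i = 0`. -/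
abbrev ExtEvenModel {A F G : Type*} [CommRing A] [AddCommGroup F] [Module A F] [AddCommGroup G]
    [Module A G] (f g : F →ₗ[A] F) (f' g' : G →ₗ[A] G) (i : ℕ) : Type _ :=
  (ker (compRight A f') ⊓ ker (lcomp A G f) : Submodule A (F →ₗ[A] G)) ⧸
    (range ((if i = 0 then 0 else 1 : A) • compRight A g' ∘ₗ lcomp A G g)).submoduleOf
      (ker (compRight A f') ⊓ ker (lcomp A G f))

namespace IsExactPair

lemma symm {A F : Type*} [CommRing A] [AddCommGroup F] [Module A F] {f g : F →ₗ[A] F}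
    (h : IsExactPair f g) : IsExactPair g f :=
  ⟨h.exact_symm, h.exact⟩

section Resolution

variable {A F : Type u} [CommRing A] [AddCommGroup F] [Module A F] {f g : F →ₗ[A] F}

lemma ofHom_comp (h : IsExactPair f g) : ModuleCat.ofHom f ≫ ModuleCat.ofHom g = 0 :=
  ModuleCat.hom_ext h.exact.linearMap_comp_eq_zero

lemma shortComplex_exact (h : IsExactPair f g) :
    (ShortComplex.mk (ModuleCat.ofHom f) (ModuleCat.ofHom g) h.ofHom_comp).Exact :=
  (ShortComplex.ShortExact.moduleCat_exact_iff_function_exact _).2 h.exact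

/-- The complex `… → F → F → F` with differentials alternating between `f` and `g`, ending with `f`
in degrees `1 → 0`. -/
def complex (h : IsExactPair f g) : ChainComplex (ModuleCat.{u} A) ℕ :=
  HomologicalComplex.alternatingConst (ModuleCat.of A F) (φ := ModuleCat.ofHom g)
    (ψ := ModuleCat.ofHom f) h.symm.ofHom_comp h.ofHom_comp
    fun _ _ ↦ ComplexShape.down_nat_odd_add

lemma complex_d_of_even (h : IsExactPair f g) {i : ℕ} (hi : Even (i + 1)) :
    h.complex.d (i + 1) i = ModuleCat.ofHom g :=
  (dif_pos rfl).trans (dif_pos hi)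

lemma complex_d_of_odd (h : IsExactPair f g) {i : ℕ} (hi : Odd (i + 1)) :
    h.complex.d (i + 1) i = ModuleCat.ofHom f :=
  (dif_pos rfl).trans (dif_neg (Nat.not_even_iff_odd.2 hi))

lemma complex_d_prev_of_even (h : IsExactPair f g) {i : ℕ} (hi : Even i) :
    h.complex.d i ((ComplexShape.up ℕ).prev i) =
      ModuleCat.ofHom ((if i = 0 then 0 else 1 : A) • g) := by
  rcases i with _ | i
  · rw [h.complex.shape _ _ (by simp)]
    simp only [reduceIte, zero_smul]
    rfl
  · rw [CochainComplex.prev_nat_succ, h.complex_d_of_even hi, if_neg i.succ_ne_zero, one_smul]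

lemma complex_d_prev_of_odd (h : IsExactPair f g) {i : ℕ} (hi : Odd i) :
    h.complex.d i ((ComplexShape.up ℕ).prev i) = ModuleCat.ofHom f := by
  obtain ⟨k, rfl⟩ := hi
  rw [CochainComplex.prev_nat_succ, h.complex_d_of_odd (odd_two_mul_add_one k)]

lemma complex_exactAt_succ (h : IsExactPair f g) (n : ℕ) : h.complex.ExactAt (n + 1) := by
  rw [HomologicalComplex.exactAt_iff' _ (n + 2) (n + 1) n (by simp) (by simp)]
  rcases Nat.even_or_odd (n + 1) with hn | hn
  · exact ShortComplex.exact_of_iso (HomologicalComplex.alternatingConstScIsoEven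
      _ _ _ _ rfl rfl hn).symm h.shortComplex_exact
  · exact ShortComplex.exact_of_iso (HomologicalComplex.alternatingConstScIsoOdd
      _ _ _ _ rfl rfl hn).symm h.symm.shortComplex_exact

/-- The projection `F → coker f`, as a map from the periodic complex to `coker f` in degree `0`. -/
def augmentation (h : IsExactPair f g) :
    h.complex ⟶ (ChainComplex.single₀ _).obj (ModuleCat.of A (F ⧸ range f)) :=
  (h.complex.toSingle₀Equiv _).symm ⟨ModuleCat.ofHom (range f).mkQ, by
    rw [h.complex_d_of_odd odd_one]
    exact ModuleCat.hom_ext (range_mkQ_comp f)⟩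

lemma quasiIso_augmentation (h : IsExactPair f g) : QuasiIso h.augmentation where
  quasiIsoAt
    | 0 => by
      rw [ChainComplex.quasiIsoAt₀_iff, ShortComplex.quasiIso_iff_of_zeros' _ rfl rfl rfl]
      refine ⟨?_, (ModuleCat.epi_iff_surjective _).2 (range f).mkQ_surjective⟩
      rw [ShortComplex.ShortExact.moduleCat_exact_iff_function_exact]
      change Function.Exact (h.complex.d 1 0) (range f).mkQ
      rw [h.complex_d_of_odd odd_one]
      exact exact_map_mkQ_range f
    | n + 1 => by
      rw [quasiIsoAt_iff_exactAt' (hL := ChainComplex.exactAt_succ_single_obj ..)]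
      exact h.complex_exactAt_succ n

/-- The `2`-periodic projective resolution of `coker f`. -/
def resolution [Module.Projective A F] (h : IsExactPair f g) :
    ProjectiveResolution (ModuleCat.of A (F ⧸ range f)) where
  complex := h.complex
  projective _ := inferInstanceAs (Projective (ModuleCat.of A F))
  π := h.augmentation
  quasiIso := h.quasiIso_augmentation

/-- `Ext^i(coker f, N)` computed from the periodic resolution, whose differentials around degree `i`
are `P` and `Q`. -/
def extIso [Module.Projective A F] (h : IsExactPair f g) {i : ℕ}
    {P Q : F →ₗ[A] F} (hP : h.complex.d i ((ComplexShape.up ℕ).prev i) = ModuleCat.ofHom P)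
    (hQ : h.complex.d (i + 1) i = ModuleCat.ofHom Q) (N : Type u) [AddCommGroup N] [Module A N] :
    extModule A i (F ⧸ range f) N ≅
      ModuleCat.of A (ker (lcomp A N Q) ⧸ (range (lcomp A N P)).submoduleOf (ker (lcomp A N Q))) :=
  have comp_eq_zero : P ∘ₗ Q = 0 := by
    have d_comp_d := h.complex.d_comp_d (i + 1) i ((ComplexShape.up ℕ).prev i)
    rw [hP, hQ] at d_comp_d
    exact congrArg ModuleCat.Hom.hom d_comp_d
  have lcomp_comp_eq_zero : lcomp A N Q ∘ₗ lcomp A N P = 0 := by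
    ext w v
    simpa using congrArg w (LinearMap.congr_fun comp_eq_zero v)
  let C := h.resolution.complex.linearYonedaObj A (ModuleCat.of A N)
  let e : (ModuleCat.of A F ⟶ ModuleCat.of A N) ≃ₗ[A] (F →ₗ[A] N) := ModuleCat.homLinearEquiv
  let eC : C.sc' ((ComplexShape.up ℕ).prev i) i (i + 1) ≅
      ShortComplex.mk (ModuleCat.ofHom (lcomp A N P)) (ModuleCat.ofHom (lcomp A N Q))
        (ModuleCat.hom_ext lcomp_comp_eq_zero) :=
    ShortComplex.isoMk e.toModuleIso e.toModuleIso e.toModuleIso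
      (ModuleCat.hom_ext (LinearMap.ext fun w ↦ congrArg (fun d ↦ (d ≫ w).hom) hP.symm))
      (ModuleCat.hom_ext (LinearMap.ext fun w ↦ congrArg (fun d ↦ (d ≫ w).hom) hQ.symm))
  h.resolution.isoExt (R := A) i (ModuleCat.of A N) ≪≫
    ShortComplex.homologyMapIso (C.isoSc' _ i (i + 1) rfl (by simp) ≪≫ eC) ≪≫
    homologyIsoSubquotient _ _ _

end Resolution

section CokerEmbedding

variable {A F G : Type*} [CommRing A] [AddCommGroup F] [Module A F] [AddCommGroup G] [Module A G]
  {f g : F →ₗ[A] F} {f' g' : G →ₗ[A] G}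

lemma range_mkQ_comp_eq_zero_iff (h' : IsExactPair f' g') (w : F →ₗ[A] G) :
    (range f').mkQ ∘ₗ w = 0 ↔ g' ∘ₗ w = 0 := by
  rw [← range_le_ker_iff, ← range_le_ker_iff, Submodule.ker_mkQ, h'.exact.linearMap_ker_eq]

/-- The embedding of `coker f'` into `G` induced by `g'`, with image `ker f'`. -/
def cokerEmbedding (h' : IsExactPair f' g') : G ⧸ range f' →ₗ[A] G :=
  (range f').liftQ g' h'.exact.linearMap_ker_eq.ge

lemma cokerEmbedding_mk (h' : IsExactPair f' g') (v : G) :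
    h'.cokerEmbedding (Submodule.Quotient.mk v) = g' v := rfl

lemma cokerEmbedding_injective (h' : IsExactPair f' g') : Function.Injective h'.cokerEmbedding :=
  ker_eq_bot.1 (Submodule.ker_liftQ_eq_bot _ _ _ h'.exact.linearMap_ker_eq.le)

lemma exact_cokerEmbedding (h' : IsExactPair f' g') : Function.Exact h'.cokerEmbedding f' := by
  rw [exact_iff, h'.exact_symm.linearMap_ker_eq]
  exact (Submodule.range_liftQ ..).symm

variable [Module.Projective A F]

lemma map_compRight_mkQ_ker (h' : IsExactPair f' g') :
    (ker (compRight A g' ∘ₗ lcomp A G g)).map (compRight A (range f').mkQ) =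
      ker (lcomp A (G ⧸ range f') g) := by
  have comap_ker : (ker (lcomp A (G ⧸ range f') g)).comap (compRight A (range f').mkQ) =
      ker (compRight A g' ∘ₗ lcomp A G g) :=
    Submodule.ext fun w ↦ h'.range_mkQ_comp_eq_zero_iff (w ∘ₗ g)
  rw [← comap_ker, Submodule.map_comap_eq, range_compRight_mkQ, top_inf_eq]

lemma map_compRight_cokerEmbedding_ker (h' : IsExactPair f' g') (f : F →ₗ[A] F) :
    (ker (lcomp A (G ⧸ range f') f)).map (compRight A h'.cokerEmbedding) =
      ker (compRight A f') ⊓ ker (lcomp A G f) := by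
  have comap_ker : (ker (lcomp A G f)).comap (compRight A h'.cokerEmbedding) =
      ker (lcomp A (G ⧸ range f') f) := by
    ext w
    exact map_eq_zero_iff (compRight A (M := F) h'.cokerEmbedding)
      h'.cokerEmbedding_injective.injective_linearMapComp_left (x := w ∘ₗ f)
  rw [(exact_compRight_of_projective h'.exact_cokerEmbedding).linearMap_ker_eq, ← comap_ker,
    Submodule.map_comap_eq]

lemma map_compRight_cokerEmbedding_range (h' : IsExactPair f' g') (c : A) (g : F →ₗ[A] F) :
    (range (lcomp A (G ⧸ range f') (c • g))).map (compRight A h'.cokerEmbedding) =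
      range (c • compRight A g' ∘ₗ lcomp A G g) := by
  rw [← range_comp, ← range_comp_of_range_eq_top _ (range_compRight_mkQ (range f'))]
  congr 1
  ext w v
  simp [h'.cokerEmbedding_mk]

end CokerEmbedding

section Ext

variable {A F G : Type u} [CommRing A] [AddCommGroup F] [Module A F] [AddCommGroup G] [Module A G]
  [Module.Projective A F] {f g : F →ₗ[A] F} {f' g' : G →ₗ[A] G}

/-- `Ext^i(coker f, coker f')` for odd `i`: since `F` is projective, maps into `coker f'` are the
images of maps into `G`. -/
def extOddIso (h : IsExactPair f g) (h' : IsExactPair f' g') {i : ℕ} (hi : Odd i) :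
    extModule A i (F ⧸ range f) (G ⧸ range f') ≅ ModuleCat.of A (ExtOddModel f g f' g') :=
  h.extIso (h.complex_d_prev_of_odd hi) (h.complex_d_of_even hi.add_one) _ ≪≫
    (subquotientEquivOfMap (compRight A (range f').mkQ) h'.map_compRight_mkQ_ker
      (map_compRight_mkQ_range f f')
      ((ker_compRight_mkQ_range f').trans_le le_sup_left)).symm.toModuleIso

/-- `Ext^i(coker f, coker f')` for even `i`: maps into `coker f'` are regarded as maps into
`ker f' ⊆ G` by means of `cokerEmbedding`. -/
def extEvenIso (h : IsExactPair f g) (h' : IsExactPair f' g') {i : ℕ} (hi : Even i) :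
    extModule A i (F ⧸ range f) (G ⧸ range f') ≅ ModuleCat.of A (ExtEvenModel f g f' g' i) :=
  h.extIso (h.complex_d_prev_of_even hi) (h.complex_d_of_odd hi.add_one) _ ≪≫
    (subquotientEquivOfMap (compRight A h'.cokerEmbedding) (h'.map_compRight_cokerEmbedding_ker f)
      (h'.map_compRight_cokerEmbedding_range _ g) (by
        rw [ker_eq_bot.2 h'.cokerEmbedding_injective.injective_linearMapComp_left]
        exact bot_le)).toModuleIso

end Ext

end IsExactPair

section AntiAutomorphism

variable {A F : Type*} [CommRing A] [AddCommGroup F] [Module A F]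
  {σ : Module.End A F ≃ₗ[A] Module.End A F}

lemma conj_compRight (hσ : ∀ v w, σ (v * w) = σ w * σ v) (v : Module.End A F) :
    σ.conj (compRight A v) = lcomp A F (σ v) := by
  ext1 w
  simpa using! hσ v (σ.symm w)

lemma conj_lcomp (hσ : ∀ v w, σ (v * w) = σ w * σ v) (v : Module.End A F) :
    σ.conj (lcomp A F v) = compRight A (σ v) := by
  ext1 w
  simpa using! hσ (σ.symm w) v

lemma conj_compRight_comp_lcomp (hσ : ∀ v w, σ (v * w) = σ w * σ v) (v w : Module.End A F) :
    σ.conj (compRight A w ∘ₗ lcomp A F v) = compRight A (σ v) ∘ₗ lcomp A F (σ w) := by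
  rw [LinearEquiv.conj_comp, conj_compRight hσ, conj_lcomp hσ]
  rfl

/-- An anti-automorphism exchanges the roles of the two exact pairs in the odd model. -/
def extOddModelAntiEquiv (hσ : ∀ v w, σ (v * w) = σ w * σ v) (f g f' g' : Module.End A F) :
    ExtOddModel f g f' g' ≃ₗ[A] ExtOddModel (σ f') (σ g') (σ f) (σ g) :=
  subquotientEquivOfMap σ.toLinearMap
    (by rw [map_ker_conj, conj_compRight_comp_lcomp hσ])
    (by rw [Submodule.map_sup, map_range_conj, map_range_conj, conj_compRight hσ,
      conj_lcomp hσ, sup_comm])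
    (σ.ker.trans_le bot_le)

/-- An anti-automorphism exchanges the roles of the two exact pairs in the even model. -/
def extEvenModelAntiEquiv (hσ : ∀ v w, σ (v * w) = σ w * σ v) (f g f' g' : Module.End A F)
    (i : ℕ) :
    ExtEvenModel f g f' g' i ≃ₗ[A] ExtEvenModel (σ f') (σ g') (σ f) (σ g) i :=
  subquotientEquivOfMap σ.toLinearMap
    (by rw [Submodule.map_inf _ σ.injective, map_ker_conj, map_ker_conj,
      conj_compRight hσ, conj_lcomp hσ, inf_comm])
    (by rw [map_range_conj, map_smul, conj_compRight_comp_lcomp hσ])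
    (σ.ker.trans_le bot_le)

theorem IsExactPair.nonempty_ext_antiAutomorphism_iso {A F : Type u} [CommRing A] [AddCommGroup F]
    [Module A F] [Module.Projective A F] {f g f' g' : Module.End A F}
    {σ : Module.End A F ≃ₗ[A] Module.End A F} (hσ : ∀ v w, σ (v * w) = σ w * σ v)
    (h : IsExactPair f g) (h' : IsExactPair f' g') (hσf : IsExactPair (σ f) (σ g))
    (hσf' : IsExactPair (σ f') (σ g')) (i : ℕ) :
    Nonempty (extModule A i (F ⧸ range f) (F ⧸ range f') ≅
      extModule A i (F ⧸ range (σ f')) (F ⧸ range (σ f))) := by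
  rcases i.even_or_odd with hi | hi
  · exact ⟨h.extEvenIso h' hi ≪≫ (extEvenModelAntiEquiv hσ f g f' g' i).toModuleIso ≪≫
      (hσf'.extEvenIso hσf hi).symm⟩
  · exact ⟨h.extOddIso h' hi ≪≫ (extOddModelAntiEquiv hσ f g f' g').toModuleIso ≪≫
      (hσf'.extOddIso hσf hi).symm⟩

end AntiAutomorphism

section Adjugate

open Matrix

variable {A : Type*} [CommRing A]

lemma adjugate_adjugate_fin_two (p : Matrix (Fin 2) (Fin 2) A) : p.adjugate.adjugate = p := by
  simp [adjugate_adjugate']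

/-- The adjugate of `2 × 2` matrices as a linear involution. -/
def adjugateEquiv : Matrix (Fin 2) (Fin 2) A ≃ₗ[A] Matrix (Fin 2) (Fin 2) A :=
  LinearEquiv.ofInvolutive
    { toFun := adjugate
      map_add' p q := by ext i j; fin_cases i <;> fin_cases j <;> simp [adjugate_fin_two, add_comm]
      map_smul' c p := by simp [adjugate_smul] }
    adjugate_adjugate_fin_two

/-- The adjugate as an anti-automorphism of the endomorphism algebra of `A²`. -/
def endAdjugate : Module.End A (Fin 2 → A) ≃ₗ[A] Module.End A (Fin 2 → A) :=
  toLin'.symm ≪≫ₗ adjugateEquiv ≪≫ₗ toLin'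

lemma endAdjugate_toLin' (p : Matrix (Fin 2) (Fin 2) A) :
    endAdjugate (toLin' p) = toLin' p.adjugate := by
  simp only [endAdjugate, LinearEquiv.trans_apply, toLin'_symm, toMatrix'_toLin']
  rfl

lemma endAdjugate_mul (v w : Module.End A (Fin 2 → A)) :
    endAdjugate (v * w) = endAdjugate w * endAdjugate v := by
  obtain ⟨p, rfl⟩ := toLin'.surjective v
  obtain ⟨q, rfl⟩ := toLin'.surjective w
  simp only [Module.End.mul_eq_comp, ← toLin'_mul, endAdjugate_toLin', adjugate_mul_distrib]

theorem nonempty_ext_adjugate_iso {A : Type u} [CommRing A] {p p' : Matrix (Fin 2) (Fin 2) A}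
    (h : IsExactPair (toLin' p) (toLin' p.adjugate))
    (h' : IsExactPair (toLin' p') (toLin' p'.adjugate)) (i : ℕ) :
    Nonempty (extModule A i ((Fin 2 → A) ⧸ range (toLin' p)) ((Fin 2 → A) ⧸ range (toLin' p')) ≅
      extModule A i ((Fin 2 → A) ⧸ range (toLin' p'.adjugate))
        ((Fin 2 → A) ⧸ range (toLin' p.adjugate))) := by
  have hσ {q : Matrix (Fin 2) (Fin 2) A} (hq : IsExactPair (toLin' q) (toLin' q.adjugate)) :
      IsExactPair (endAdjugate (toLin' q)) (endAdjugate (toLin' q.adjugate)) := by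
    simpa only [endAdjugate_toLin', adjugate_adjugate_fin_two] using hq.symm
  have key := IsExactPair.nonempty_ext_antiAutomorphism_iso endAdjugate_mul h h' (hσ h) (hσ h') i
  rwa [endAdjugate_toLin', endAdjugate_toLin'] at key

lemma adjugate_gammaMat (x y a : A) : (gammaMat x y a).adjugate = etaMat x y a := by
  simp [gammaMat, etaMat, adjugate_fin_two]

lemma adjugate_etaMat (x y a : A) : (etaMat x y a).adjugate = gammaMat x y a := by
  simp [gammaMat, etaMat, adjugate_fin_two]

lemma IsExactZeroDivisorPair.symm {x y : A} (hxy : IsExactZeroDivisorPair x y) :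
    IsExactZeroDivisorPair y x :=
  ⟨hxy.2.1, hxy.1, hxy.2.2.2, hxy.2.2.1⟩

lemma gammaMat_mulVec (x y a : A) (v : Fin 2 → A) :
    gammaMat x y a *ᵥ v = ![x * v 0 + a * v 1, y * v 1] := by
  ext j
  fin_cases j <;> simp [gammaMat, vecHead, vecTail]

lemma etaMat_eq_gammaMat (x y a : A) : etaMat x y a = gammaMat y x (-a) := rfl

lemma IsExactZeroDivisorPair.exact_gammaMat_etaMat {x y : A} (hxy : IsExactZeroDivisorPair x y)
    (a : A) : Function.Exact (toLin' (gammaMat x y a)) (toLin' (etaMat x y a)) := by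
  obtain ⟨-, -, ann_x, ann_y⟩ := hxy
  have xy_eq_zero : x * y = 0 := (ann_y x).2 (Ideal.mem_span_singleton_self x)
  intro v
  constructor
  · intro hv
    rw [toLin'_apply, etaMat_eq_gammaMat, gammaMat_mulVec] at hv
    obtain ⟨t, ht⟩ : y ∣ v 1 := Ideal.mem_span_singleton.1 <| (ann_x _).1 <| by
      simpa [mul_comm] using congrFun hv 1
    obtain ⟨s, hs⟩ : x ∣ v 0 - a * t := Ideal.mem_span_singleton.1 <| (ann_y _).1 <| by
      have hv₀ : y * v 0 + -a * v 1 = 0 := congrFun hv 0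
      linear_combination hv₀ + a * ht
    refine ⟨![s, t], ?_⟩
    rw [toLin'_apply, gammaMat_mulVec]
    ext j
    fin_cases j
    · exact (sub_eq_iff_eq_add.1 hs).symm
    · exact ht.symm
  · rintro ⟨w, rfl⟩
    rw [← LinearMap.comp_apply, ← toLin'_mul, ← adjugate_gammaMat, adjugate_mul]
    simp [gammaMat, det_fin_two, xy_eq_zero]

lemma IsExactZeroDivisorPair.isExactPair_gammaMat {x y : A} (hxy : IsExactZeroDivisorPair x y)
    (a : A) : IsExactPair (toLin' (gammaMat x y a)) (toLin' (gammaMat x y a).adjugate) where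
  exact := by simpa only [adjugate_gammaMat] using hxy.exact_gammaMat_etaMat a
  exact_symm := by
    simpa only [adjugate_gammaMat, etaMat_eq_gammaMat, neg_neg] using
      hxy.symm.exact_gammaMat_etaMat (-a)

lemma IsExactZeroDivisorPair.isExactPair_etaMat {x y : A} (hxy : IsExactZeroDivisorPair x y)
    (a : A) : IsExactPair (toLin' (etaMat x y a)) (toLin' (etaMat x y a).adjugate) :=
  hxy.symm.isExactPair_gammaMat (-a)

end Adjugate

theorem ext_G_H_iso_general {A : Type u} [CommRing A] {x y : A} (hxy : IsExactZeroDivisorPair x y)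
    (a b : A) (i : ℕ) :
    Nonempty (extModule A i (Hmod x y b) (Gmod x y a) ≅ extModule A i (Hmod x y a) (Gmod x y b)) ∧
    Nonempty (extModule A i (Gmod x y a) (Hmod x y b) ≅ extModule A i (Gmod x y b) (Hmod x y a)) ∧
    Nonempty
      (extModule A i (Gmod x y a) (Gmod x y b) ≅ extModule A i (Hmod x y b) (Hmod x y a)) := by
  have hγ := hxy.isExactPair_gammaMat
  have hη := hxy.isExactPair_etaMat
  have hHG := nonempty_ext_adjugate_iso (hη b) (hγ a) i
  have hGH := nonempty_ext_adjugate_iso (hγ a) (hη b) i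
  have hGG := nonempty_ext_adjugate_iso (hγ a) (hγ b) i
  rw [adjugate_gammaMat, adjugate_etaMat] at hHG hGH
  rw [adjugate_gammaMat, adjugate_gammaMat] at hGG
  exact ⟨hHG, hGH, hGG⟩

open CategoryTheory in
/-- **Corollary (3.5).** For an exact pair of zero divisors `x, y` and any
`a, b ∈ A` there are, for every `i`, isomorphisms of `A`-modules
`Ext_A^i(H_b, G_a) ≅ Ext_A^i(H_a, G_b)`, `Ext_A^i(G_a, H_b) ≅ Ext_A^i(G_b, H_a)`
and `Ext_A^i(G_a, G_b) ≅ Ext_A^i(H_b, H_a)`. -/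
theorem ext_G_H_iso {A : Type u} [CommRing A] [IsNoetherianRing A]
    [IsLocalRing A] {x y : A} (hxy : IsExactZeroDivisorPair x y) (a b : A)
    (i : ℕ) :
    Nonempty
      ((((Ext A (ModuleCat A) i).obj
          (Opposite.op (ModuleCat.of A (Hmod x y b)))).obj
            (ModuleCat.of A (Gmod x y a))) ≅
        (((Ext A (ModuleCat A) i).obj
          (Opposite.op (ModuleCat.of A (Hmod x y a)))).obj
            (ModuleCat.of A (Gmod x y b)))) ∧
    Nonempty
      ((((Ext A (ModuleCat A) i).obj
          (Opposite.op (ModuleCat.of A (Gmod x y a)))).obj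
            (ModuleCat.of A (Hmod x y b))) ≅
        (((Ext A (ModuleCat A) i).obj
          (Opposite.op (ModuleCat.of A (Gmod x y b)))).obj
            (ModuleCat.of A (Hmod x y a)))) ∧
    Nonempty
      ((((Ext A (ModuleCat A) i).obj
          (Opposite.op (ModuleCat.of A (Gmod x y a)))).obj
            (ModuleCat.of A (Gmod x y b))) ≅
        (((Ext A (ModuleCat A) i).obj
          (Opposite.op (ModuleCat.of A (Hmod x y b)))).obj
            (ModuleCat.of A (Hmod x y a)))) :=
  ext_G_H_iso_general hxy a b i
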